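/- arXiv:1505.00433 — 3 statements merged into one kernel-verified Lean document; each statement's English description precedes it below -/
import Mathlib

section
/- The two-sided Thue–Morse sequence is overlap-free: for every nonempty word β over {0,1} and every integer n with 1 ≤ n ≤ |β|, the word β β β_{[1,n]} (two copies of β followed by the first n letters of β) is not a factor of ω. -/
/-- One-sided Thue–Morse sequence: parity of the binary digit sum. -/
def tm (n : ℕ) : ℕ := (Nat.digits 2 n).sum % 2

/-- Two-sided Thue–Morse sequence `ω : ℤ → {0,1}`. -/
def tmZ (n : ℤ) : ℕ := if 0 ≤ n then tm n.toNat else tm (-n - 1).toNat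

/-- The block `ω_[m, m+k-1]` of the two-sided Thue–Morse sequence. -/
def tmBlock (m : ℤ) (k : ℕ) : List ℕ := (List.range k).map fun j => tmZ (m + j)

/-- A (nonempty) word is a factor of the two-sided Thue–Morse sequence. -/
def IsFactor (α : List ℕ) : Prop := α ≠ [] ∧ ∃ m : ℤ, α = tmBlock m α.length

/-- The words `i⁽ⁿ⁾`: `blk i 0 = [i]`, `blk i (n+1) = blk i n ++ blk (1-i) n`. -/
def blk : ℕ → ℕ → List ℕ
  | i, 0 => [i]
  | i, n + 1 => blk i n ++ blk (1 - i) n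

theorem tm_even (n : ℕ) : tm (2 * n) = tm n := by
  unfold tm
  rcases Nat.eq_zero_or_pos n with h | h
  · subst h; simp
  · have := Nat.digits_add_two_add_one 0 (2 * n - 1)
    rw [show 2 * n - 1 + 1 = 2 * n by omega] at this
    simp at this
    rw [this]; simp

theorem tm_odd (n : ℕ) : tm (2 * n + 1) = 1 - tm n := by
  unfold tm
  have := Nat.digits_add_two_add_one 0 (2 * n)
  simp only [zero_add] at this
  rw [this, show (2 * n + 1) % 2 = 1 by omega, show (2 * n + 1) / 2 = n by omega, List.sum_cons]
  omega

theorem tm_le (n : ℕ) : tm n ≤ 1 := by unfold tm; omega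

/-- companion sequence `n ↦ ω (2n)` -/
def tmW (n : ℤ) : ℕ := if 0 ≤ n then tm n.toNat else 1 - tm (-n - 1).toNat

theorem ov_core (p : ℕ) : 1 ≤ p → ∀ f g : ℤ → ℕ, (∀ n, f n ≤ 1) → (∀ n, g n ≤ 1) →
    (∀ n, f (2 * n) = g n) → (∀ n, f (2 * n + 1) = 1 - g n) →
    (∀ n, g (2 * n) = f n) → (∀ n, g (2 * n + 1) = 1 - f n) →
    ∀ m : ℤ, ¬ ∀ j : ℕ, j ≤ p → f (m + j) = f (m + j + p) := by
  induction p using Nat.strong_induction_on with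
  | _ p ih =>
  intro hp f g hf hg f0 f1 g0 g1 m H
  rcases Nat.even_or_odd' p with ⟨q, hq | hq⟩
  · refine ih q (by omega) (by omega) g f hg hf g0 g1 f0 f1 (m / 2) ?_
    intro j hj
    have h := H (2 * j) (by omega)
    rcases Int.emod_two_eq_zero_or_one m with hm | hm
    · rw [show m + ((2 * j : ℕ) : ℤ) + (p : ℤ) = 2 * (m / 2 + j + q) by push_cast [hq]; omega,
        show m + ((2 * j : ℕ) : ℤ) = 2 * (m / 2 + j) by push_cast; omega, f0, f0] at h
      exact h
    · rw [show m + ((2 * j : ℕ) : ℤ) + (p : ℤ) = 2 * (m / 2 + j + q) + 1 by push_cast [hq]; omega,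
        show m + ((2 * j : ℕ) : ℤ) = 2 * (m / 2 + j) + 1 by push_cast; omega, f1, f1] at h
      have := hg (m / 2 + j)
      have := hg (m / 2 + j + q)
      omega
  · have alt : ∀ x : ℤ, x % 2 = 0 → f x + f (x + 1) = 1 := by
      intro x hx
      have a := f0 (x / 2)
      have b := f1 (x / 2)
      rw [show 2 * (x / 2) = x by omega] at a b
      have := hg (x / 2)
      omega
    have alt2 : ∀ j : ℕ, j < p → f (m + j) + f (m + j + 1) = 1 := by
      intro j hj
      rcases Int.emod_two_eq_zero_or_one (m + j) with hm | hm
      · exact alt _ hm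
      · have h1 := H j (by omega)
        have h2 := H (j + 1) (by omega)
        have h3 := alt (m + j + p) (by omega)
        rw [show m + ((j + 1 : ℕ) : ℤ) + (p : ℤ) = m + j + p + 1 by push_cast; ring,
          show m + ((j + 1 : ℕ) : ℤ) = m + j + 1 by push_cast; ring] at h2
        omega
    have alt3 : ∀ i : ℕ, 2 * i ≤ p → f (m + (2 * i : ℕ)) = f m := by
      intro i
      induction i with
      | zero => simp
      | succ i ihi =>
        intro hi
        have h0 := ihi (by omega)
        have h1 := alt2 (2 * i) (by omega)
        have h2 := alt2 (2 * i + 1) (by omega)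
        rw [show m + ((2 * i + 1 : ℕ) : ℤ) + 1 = m + (2 * (i + 1) : ℕ) by push_cast; ring,
          show m + ((2 * i + 1 : ℕ) : ℤ) = m + (2 * i : ℕ) + 1 by push_cast; ring] at h2
        omega
    have h0 := alt3 q (by omega)
    have h1 := alt2 (2 * q) (by omega)
    have h2 := H 0 (by omega)
    rw [show m + ((2 * q : ℕ) : ℤ) + 1 = m + p by push_cast [hq]; ring] at h1
    simp only [Nat.cast_zero, add_zero] at h2
    omega

theorem tmZ_no (p : ℕ) (hp : 1 ≤ p) (m : ℤ) :
    ¬ ∀ j : ℕ, j ≤ p → tmZ (m + j) = tmZ (m + j + p) := by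
  refine ov_core p hp tmZ tmW ?_ ?_ ?_ ?_ ?_ ?_ m
  · intro n; unfold tmZ; split_ifs <;> apply tm_le
  · intro n; unfold tmW; split_ifs
    · apply tm_le
    · omega
  all_goals
    intro n
    unfold tmZ tmW
    by_cases h : 0 ≤ n
    · simp only [h, if_true, show (0 : ℤ) ≤ 2 * n by omega, show (0 : ℤ) ≤ 2 * n + 1 by omega]
      first
      | rw [show (2 * n).toNat = 2 * n.toNat by omega, tm_even]
      | rw [show (2 * n + 1).toNat = 2 * n.toNat + 1 by omega, tm_odd]
    · simp only [h, if_false, show ¬ (0 : ℤ) ≤ 2 * n by omega,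
        show ¬ (0 : ℤ) ≤ 2 * n + 1 by omega]
      have := tm_le (-n - 1).toNat
      first
      | rw [show (-(2 * n) - 1).toNat = 2 * (-n - 1).toNat + 1 by omega, tm_odd]
        try omega
      | rw [show (-(2 * n + 1) - 1).toNat = 2 * (-n - 1).toNat by omega, tm_even]
        try omega

theorem thueMorse_overlapFree (β : List ℕ) (hβ : β ≠ []) (hβ01 : ∀ x ∈ β, x = 0 ∨ x = 1)
    (n : ℕ) (hn1 : 1 ≤ n) (hn2 : n ≤ β.length) :
    ¬ IsFactor (β ++ β ++ β.take n) := by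
  rintro ⟨-, m, hm⟩
  have hp : 1 ≤ β.length := by omega
  refine tmZ_no β.length hp m ?_
  intro j hj
  have key : ∀ i, i < 2 * β.length + n → (β ++ β ++ β.take n)[i]? = some (tmZ (m + i)) := by
    intro i hi
    rw [hm]
    have : i < (β ++ β ++ β.take n).length := by simp; omega
    generalize (β ++ β ++ β.take n).length = L at this
    have e : (List.range L).flatMap (fun a : ℕ => [(a : ℤ)]) =
        (List.range L).map (fun a : ℕ => (a : ℤ)) := by
      generalize List.range L = l
      induction l with
      | nil => rfl
      | cons a l ih => simp [List.flatMap_cons, ih]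
    simp [tmBlock, this, e]
  have h1 := key j (by omega)
  have h2 := key (j + β.length) (by omega)
  have h3 : (β ++ β ++ β.take n)[j]? = (β ++ β ++ β.take n)[j + β.length]? := by
    rcases Nat.lt_or_ge j β.length with h | h
    · rw [List.append_assoc, List.getElem?_append_left h,
        List.getElem?_append_right (by omega), Nat.add_sub_cancel, List.getElem?_append_left h]
    · obtain rfl : j = β.length := by omega
      have e1 : (β ++ (β ++ β.take n))[β.length]? = β[0]? := by
        rw [List.getElem?_append_right (le_refl _), Nat.sub_self,
          List.getElem?_append_left (by omega)]
      have e2 : (β ++ (β ++ β.take n))[β.length + β.length]? = β[0]? := by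
        rw [List.getElem?_append_right (by omega), Nat.add_sub_cancel,
          List.getElem?_append_right (le_refl _), Nat.sub_self,
          List.getElem?_take_of_lt (by omega)]
      rw [List.append_assoc, e1, e2]
  rw [h1, h2] at h3
  have := Option.some.inj h3
  rw [this]; push_cast; congr 1; ring
end

section
/- Let n ≥ 1 and let i_1, i_2, i_3, i_4, i_5 ∈ {0,1} be such that α = i_1^{(n)} i_2^{(n)} i_3^{(n)} i_4^{(n)} i_5^{(n)} is a factor of ω. Then exactly one of the following two alternatives holds: (i) i_2 = 1 − i_1 and i_4 = 1 − i_3, so that α = i_1^{(n+1)} i_3^{(n+1)} i_5^{(n)}; or (ii) i_3 = 1 − i_2 and i_5 = 1 − i_4, so that α = i_1^{(n)} i_2^{(n+1)} i_4^{(n+1)}. -/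
theorem tm_lt (n : ℕ) : tm n = 0 ∨ tm n = 1 := by unfold tm; omega

def GG (c : Bool) (n : ℤ) : ℕ :=
  if 0 ≤ n then tm n.toNat else if c then 1 - tm (-n - 1).toNat else tm (-n - 1).toNat

theorem GG_val (c : Bool) (n : ℤ) : GG c n = 0 ∨ GG c n = 1 := by
  have h1 := tm_lt n.toNat
  have h2 := tm_lt (-n - 1).toNat
  unfold GG
  split_ifs <;> omega

theorem GG_even (c : Bool) (n : ℤ) : GG c (2 * n) = GG (!c) n := by
  have h2 := tm_lt (-n - 1).toNat
  unfold GG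
  by_cases h : 0 ≤ n
  · rw [if_pos (by omega), if_pos h, show (2 * n).toNat = 2 * n.toNat by omega, tm_even]
  · rw [if_neg (by omega), if_neg h,
      show (-(2 * n) - 1).toNat = 2 * (-n - 1).toNat + 1 by omega, tm_odd]
    generalize tm (-n - 1).toNat = x at *
    cases c <;> simp
    omega

theorem GG_odd (c : Bool) (n : ℤ) : GG c (2 * n + 1) = 1 - GG (!c) n := by
  have h2 := tm_lt (-n - 1).toNat
  unfold GG
  by_cases h : 0 ≤ n
  · rw [if_pos (by omega), if_pos h, show (2 * n + 1).toNat = 2 * n.toNat + 1 by omega, tm_odd]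
  · rw [if_neg (by omega), if_neg h,
      show (-(2 * n + 1) - 1).toNat = 2 * (-n - 1).toNat by omega, tm_even]
    generalize tm (-n - 1).toNat = x at *
    cases c <;> simp
    omega

theorem GG_three (c : Bool) (n : ℤ) (h1 : GG c n = GG c (n + 1))
    (h2 : GG c (n + 1) = GG c (n + 2)) : False := by
  rcases Int.even_or_odd' n with ⟨k, rfl | rfl⟩
  · have a := GG_even c k
    have b := GG_odd c k
    have := GG_val (!c) k
    omega
  · have a := GG_even c (k + 1)
    have b := GG_odd c (k + 1)
    have := GG_val (!c) (k + 1)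
    rw [show 2 * k + 1 + 1 = 2 * (k + 1) by ring, show 2 * k + 1 + 2 = 2 * (k + 1) + 1 by ring] at h2
    omega

def Occ (f : ℤ → ℕ) : ℤ → List ℕ → Prop
  | _, [] => True
  | m, a :: l => f m = a ∧ Occ f (m + 1) l

def phi : List ℕ → List ℕ
  | [] => []
  | a :: l => a :: (1 - a) :: phi l

theorem phi_append (l l' : List ℕ) : phi (l ++ l') = phi l ++ phi l' := by
  induction l with
  | nil => rfl
  | cons a l ih => simp [phi, ih]

theorem blk_succ (n : ℕ) : ∀ i, blk i (n + 1) = phi (blk i n) := by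
  induction n with
  | zero => intro i; rfl
  | succ n ih =>
    intro i
    rw [blk, ih, ih, ← phi_append]
    congr 1
    rw [← ih, blk]

theorem blk_len (n : ℕ) : ∀ i, 1 ≤ (blk i n).length := by
  induction n with
  | zero => intro i; simp [blk]
  | succ n ih =>
    intro i
    have := ih i
    simp only [blk, List.length_append]
    omega

theorem occ_even (c : Bool) (l : List ℕ) :
    ∀ m, Occ (GG c) (2 * m) (phi l) → Occ (GG (!c)) m l := by
  induction l with
  | nil => intro m _; trivial
  | cons a l ih =>
    intro m h
    obtain ⟨h1, h2, h3⟩ := h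
    refine ⟨by rw [← GG_even, h1], ih _ ?_⟩
    rwa [show 2 * (m + 1) = 2 * m + 1 + 1 by ring]

theorem occ_odd (c : Bool) (l : List ℕ) (hl : 5 ≤ l.length) (m : ℤ)
    (h : Occ (GG c) (2 * m + 1) (phi l)) : False := by
  match l, hl with
  | a :: b :: d :: e :: _ :: l, _ =>
    obtain ⟨h1, h2, h3, h4, h5, h6, h7, h8, -⟩ := h
    rw [show 2 * m + 1 + 1 = 2 * (m + 1) by ring] at *
    rw [show 2 * (m + 1) + 1 + 1 = 2 * (m + 2) by ring] at *
    rw [show 2 * (m + 2) + 1 + 1 = 2 * (m + 3) by ring] at *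
    rw [show 2 * (m + 3) + 1 + 1 = 2 * (m + 4) by ring] at *
    rw [GG_even] at h2 h4 h6 h8
    rw [GG_odd] at h3 h5 h7
    have v1 := GG_val (!c) (m + 1)
    have v2 := GG_val (!c) (m + 2)
    have v3 := GG_val (!c) (m + 3)
    apply GG_three (!c) (m + 1)
    · rw [show m + 1 + 1 = m + 2 by ring]; omega
    · rw [show m + 1 + 1 = m + 2 by ring, show m + 1 + 2 = m + 3 by ring]; omega

theorem occ_block (f : ℤ → ℕ) (l : List ℕ) : ∀ m : ℤ,
    l = (List.range l.length).map (fun j : ℕ => f (m + j)) → Occ f m l := by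
  induction l with
  | nil => intro m _; trivial
  | cons a l ih =>
    intro m h
    rw [List.length_cons, List.range_succ_eq_map, List.map_cons, List.map_map] at h
    obtain ⟨h1, h2⟩ := List.cons.inj h
    refine ⟨by simpa using h1.symm, ih _ (h2.trans ?_)⟩
    apply List.map_congr_left
    intro j _
    simp only [Function.comp]
    congr 1
    push_cast
    ring

theorem base_case (c : Bool) (m : ℤ) (i₁ i₂ i₃ i₄ i₅ : ℕ)
    (h : Occ (GG c) m [i₁, i₂, i₃, i₄, i₅]) :
    Xor' (i₂ = 1 - i₁ ∧ i₄ = 1 - i₃) (i₃ = 1 - i₂ ∧ i₅ = 1 - i₄) := by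
  obtain ⟨h1, h2, h3, h4, h5, -⟩ := h
  rcases Int.even_or_odd' m with ⟨k, rfl | rfl⟩
  · rw [show 2 * k + 1 + 1 = 2 * (k + 1) by ring] at *
    rw [show 2 * (k + 1) + 1 + 1 = 2 * (k + 2) by ring] at *
    rw [GG_even] at h1 h3 h5
    rw [GG_odd] at h2 h4
    have v1 := GG_val (!c) k
    have v2 := GG_val (!c) (k + 1)
    have v3 := GG_val (!c) (k + 2)
    have t : ¬ (GG (!c) k = GG (!c) (k + 1) ∧ GG (!c) (k + 1) = GG (!c) (k + 2)) :=
      fun h => GG_three (!c) k h.1 h.2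
    refine Or.inl ⟨by omega, by omega⟩
  · rw [show 2 * k + 1 + 1 = 2 * (k + 1) by ring] at *
    rw [show 2 * (k + 1) + 1 + 1 = 2 * (k + 2) by ring] at *
    rw [GG_even] at h2 h4
    rw [GG_odd] at h1 h3 h5
    have v1 := GG_val (!c) k
    have v2 := GG_val (!c) (k + 1)
    have v3 := GG_val (!c) (k + 2)
    have t : ¬ (GG (!c) k = GG (!c) (k + 1) ∧ GG (!c) (k + 1) = GG (!c) (k + 2)) :=
      fun h => GG_three (!c) k h.1 h.2
    refine Or.inr ⟨by omega, by omega⟩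

theorem main_occ (n : ℕ) (i₁ i₂ i₃ i₄ i₅ : ℕ) : ∀ (c : Bool) (m : ℤ),
    Occ (GG c) m (blk i₁ n ++ blk i₂ n ++ blk i₃ n ++ blk i₄ n ++ blk i₅ n) →
    Xor' (i₂ = 1 - i₁ ∧ i₄ = 1 - i₃) (i₃ = 1 - i₂ ∧ i₅ = 1 - i₄) := by
  induction n with
  | zero => intro c m h; exact base_case c m _ _ _ _ _ h
  | succ n ih =>
    intro c m h
    simp only [blk_succ, ← phi_append] at h
    rcases Int.even_or_odd' m with ⟨k, rfl | rfl⟩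
    · exact ih _ _ (occ_even _ _ _ h)
    · refine (occ_odd _ _ ?_ _ h).elim
      have a1 := blk_len n i₁
      have a2 := blk_len n i₂
      have a3 := blk_len n i₃
      have a4 := blk_len n i₄
      have a5 := blk_len n i₅
      simp only [List.length_append]
      omega

/-- If `i₁⁽ⁿ⁾ i₂⁽ⁿ⁾ i₃⁽ⁿ⁾ i₄⁽ⁿ⁾ i₅⁽ⁿ⁾` is a factor of the two-sided Thue–Morse
sequence (`n ≥ 1`), then exactly one of the two regroupings into `(n+1)`-blocks holds. -/
theorem five_blocks_regrouping (n : ℕ) (hn : 1 ≤ n)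
    (i₁ i₂ i₃ i₄ i₅ : ℕ)
    (h₁ : i₁ = 0 ∨ i₁ = 1) (h₂ : i₂ = 0 ∨ i₂ = 1) (h₃ : i₃ = 0 ∨ i₃ = 1)
    (h₄ : i₄ = 0 ∨ i₄ = 1) (h₅ : i₅ = 0 ∨ i₅ = 1)
    (h : IsFactor (blk i₁ n ++ blk i₂ n ++ blk i₃ n ++ blk i₄ n ++ blk i₅ n)) :
    Xor' (i₂ = 1 - i₁ ∧ i₄ = 1 - i₃) (i₃ = 1 - i₂ ∧ i₅ = 1 - i₄) := by

  obtain ⟨-, m, hm⟩ := h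
  refine main_occ n _ _ _ _ _ false m (occ_block _ _ m ?_)
  have : GG false = tmZ := by
    funext k
    simp [GG, tmZ]
  rw [this]
  refine hm.trans ?_
  generalize (blk i₁ n ++ blk i₂ n ++ blk i₃ n ++ blk i₄ n ++ blk i₅ n).length = k
  unfold tmBlock
  generalize List.range k = l
  induction l with
  | nil => rfl
  | cons a l ih => simpa using ih
end

section
/- For every factor α of ω with |α| ≥ 2, the cardinality of the set {(i,j) ∈ {0,1}² : the word i α j is a factor of ω} is 1, 2, or 4. -/
theorem tm_0 : tm 0 = 0 := by simp [tm]

theorem no_cube (n : ℕ) (h1 : tm n = tm (n+1)) (h2 : tm (n+1) = tm (n+2)) : False := by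
  rcases Nat.even_or_odd' n with ⟨p, rfl | rfl⟩
  · have := tm_even p
    have := tm_odd p
    have := tm_le p
    omega
  · have := tm_even (p+1)
    have := tm_odd (p+1)
    have := tm_le (p+1)
    rw [show 2 * (p+1) = 2*p+1+1 by ring] at *
    rw [show 2*p+1+1+1 = 2*p+1+2 by ring] at *
    omega

/-- values on a window of length five -/
theorem window (x : ℕ) : ∃ n, (x = 2 * n ∧ tm x = tm n ∧ tm (x+1) = 1 - tm n ∧ tm (x+2) = tm (n+1)
      ∧ tm (x+3) = 1 - tm (n+1) ∧ tm (x+4) = tm (n+2)) ∨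
    (x = 2 * n + 1 ∧ tm x = 1 - tm n ∧ tm (x+1) = tm (n+1) ∧ tm (x+2) = 1 - tm (n+1)
      ∧ tm (x+3) = tm (n+2) ∧ tm (x+4) = 1 - tm (n+2)) := by
  rcases Nat.even_or_odd' x with ⟨p, rfl | rfl⟩
  · refine ⟨p, Or.inl ⟨rfl, tm_even p, tm_odd p, tm_even (p+1), tm_odd (p+1), tm_even (p+2)⟩⟩
  · refine ⟨p, Or.inr ⟨rfl, tm_odd p, tm_even (p+1), tm_odd (p+1), tm_even (p+2), tm_odd (p+2)⟩⟩

theorem sync_aux (x y n p : ℕ) (hx : x = 2 * n) (hy : y = 2 * p + 1) (h0 : tm x = tm y)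
    (h1 : tm (x+1) = tm (y+1)) (h2 : tm (x+2) = tm (y+2)) (h3 : tm (x+3) = tm (y+3)) : False := by
  obtain ⟨n', h | h⟩ := window x
  · obtain ⟨p', h' | h'⟩ := window y
    · omega
    · have := tm_le n'
      have := tm_le (n'+1)
      have := tm_le p'
      have := tm_le (p'+1)
      have := tm_le (p'+2)
      exact no_cube p' (by omega) (by omega)
  · omega

theorem sync (x y : ℕ) (h0 : tm x = tm y)
    (h1 : tm (x+1) = tm (y+1)) (h2 : tm (x+2) = tm (y+2)) (h3 : tm (x+3) = tm (y+3)) :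
    x % 2 = y % 2 := by
  rcases Nat.even_or_odd' x with ⟨n, hx | hx⟩ <;> rcases Nat.even_or_odd' y with ⟨p, hy | hy⟩
  · omega
  · exact (sync_aux x y n p hx hy h0 h1 h2 h3).elim
  · exact (sync_aux y x p n hy hx h0.symm h1.symm h2.symm h3.symm).elim
  · omega

theorem no_alt (x : ℕ) (h1 : tm x = tm (x+2)) (h2 : tm (x+2) = tm (x+4))
    (h3 : tm (x+1) = tm (x+3)) : False := by
  obtain ⟨n, h | h⟩ := window x <;>
  · have := tm_le n
    have := tm_le (n+1)
    have := tm_le (n+2)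
    exact no_cube n (by omega) (by omega)

theorem no_aabaa (x : ℕ) (h1 : tm x = tm (x+1)) (h2 : tm (x+3) = tm (x+4)) : False := by
  obtain ⟨n, h | h⟩ := window x <;>
  · have := tm_le n
    have := tm_le (n+1)
    have := tm_le (n+2)
    omega

def P (k a i j : ℕ) : Prop :=
  ∃ m, tm m = i ∧ tm (m + k + 1) = j ∧ ∀ t < k, tm (m + 1 + t) = tm (a + t)

theorem P_double (l b i j : ℕ) (hi : i ≤ 1) (hl : 2 ≤ l) :
    P (2*l) (2*b) i j ↔ P l b (1-i) j := by
  constructor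
  · rintro ⟨m, h1, h2, h3⟩
    have hs : (m+1) % 2 = (2*b) % 2 := sync _ _ (h3 0 (by omega)) (h3 1 (by omega))
      (h3 2 (by omega)) (h3 3 (by omega))
    obtain ⟨n, rfl⟩ : ∃ n, m = 2*n+1 := ⟨m/2, by omega⟩
    refine ⟨n, ?_, ?_, ?_⟩
    · have := tm_odd n
      have := tm_le n
      omega
    · rw [← tm_even, ← h2]; congr 1; ring
    · intro t ht
      have := h3 (2*t) (by omega)
      rw [← tm_even, ← tm_even (b+t), mul_add 2 b t, ← this]
      congr 1; ring
  · rintro ⟨n, h1, h2, h3⟩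
    refine ⟨2*n+1, ?_, ?_, ?_⟩
    · have := tm_odd n
      omega
    · rw [show 2*n+1+2*l+1 = 2*(n+l+1) by ring, tm_even, h2]
    · intro t ht
      rcases Nat.even_or_odd' t with ⟨s, rfl | rfl⟩
      · rw [show 2*n+1+1+2*s = 2*(n+1+s) by ring, ← mul_add, tm_even, tm_even]
        exact h3 s (by omega)
      · rw [show 2*n+1+1+(2*s+1) = 2*(n+1+s)+1 by ring, ← add_assoc, ← mul_add, tm_odd, tm_odd,
          h3 s (by omega)]

theorem two_case (a i j : ℕ) (hi : i ≤ 1) (hj : j ≤ 1) (h : tm a ≠ tm (a+1)) : P 2 a i j := by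
  have e := tm_even
  have o := tm_odd
  have t0 := tm_0
  have t1 : tm 1 = 1 := by have := o 0; simpa [t0] using this
  have t2 : tm 2 = 1 := by rw [show 2 = 2*1 by rfl, e, t1]
  have t3 : tm 3 = 0 := by rw [show 3 = 2*1+1 by rfl, o, t1]
  have t4 : tm 4 = 1 := by rw [show 4 = 2*2 by rfl, e, t2]
  have t5 : tm 5 = 0 := by rw [show 5 = 2*2+1 by rfl, o, t2]
  have t6 : tm 6 = 0 := by rw [show 6 = 2*3 by rfl, e, t3]
  have t7 : tm 7 = 1 := by rw [show 7 = 2*3+1 by rfl, o, t3]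
  have t8 : tm 8 = 1 := by rw [show 8 = 2*4 by rfl, e, t4]
  have t9 : tm 9 = 0 := by rw [show 9 = 2*4+1 by rfl, o, t4]
  have t10 : tm 10 = 0 := by rw [show 10 = 2*5 by rfl, e, t5]
  have t11 : tm 11 = 1 := by rw [show 11 = 2*5+1 by rfl, o, t5]
  have t12 : tm 12 = 0 := by rw [show 12 = 2*6 by rfl, e, t6]
  have t13 : tm 13 = 1 := by rw [show 13 = 2*6+1 by rfl, o, t6]
  have t14 : tm 14 = 1 := by rw [show 14 = 2*7 by rfl, e, t7]
  have t15 : tm 15 = 0 := by rw [show 15 = 2*7+1 by rfl, o, t7]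
  have key : ∀ m, tm m = i → tm (m+3) = j → tm (m+1) = tm a → tm (m+2) = tm (a+1) → P 2 a i j := by
    intro m h1 h2 h3 h4
    refine ⟨m, h1, h2, ?_⟩
    intro t ht
    interval_cases t
    · exact h3
    · exact h4
  have ha := tm_le a
  have hb := tm_le (a+1)
  -- 0110100110010110
  obtain ha | ha : tm a = 0 ∨ tm a = 1 := by omega
  · have hb : tm (a+1) = 1 := by omega
    obtain rfl | rfl : i = 0 ∨ i = 1 := by omega
    · obtain rfl | rfl : j = 0 ∨ j = 1 := by omega
      · apply key 9 <;> simp [*]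
      · apply key 5 <;> simp [*]
    · obtain rfl | rfl : j = 0 ∨ j = 1 := by omega
      · apply key 2 <;> simp [*]
      · apply key 11 <;> simp [*]
  · have hb : tm (a+1) = 0 := by omega
    obtain rfl | rfl : i = 0 ∨ i = 1 := by omega
    · obtain rfl | rfl : j = 0 ∨ j = 1 := by omega
      · apply key 3 <;> simp [*]
      · apply key 10 <;> simp [*]
    · obtain rfl | rfl : j = 0 ∨ j = 1 := by omega
      · apply key 7 <;> simp [*]
      · apply key 1 <;> simp [*]

theorem three_imp (k : ℕ) : ∀ a i j, 2 ≤ k → i ≤ 1 → j ≤ 1 → P k a (1-i) j → P k a i (1-j) →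
    P k a (1-i) (1-j) → P k a i j := by
  induction k using Nat.strong_induction_on with
  | _ k ih =>
  intro a i j hk hi hj p1 p2 p3
  have q1 := p1
  have q2 := p2
  have q3 := p3
  obtain ⟨m1, l1, r1, w1⟩ := p1
  obtain ⟨m2, l2, r2, w2⟩ := p2
  obtain ⟨m3, l3, r3, w3⟩ := p3
  have ta := tm_le a
  have ta1 := tm_le (a+1)
  have ta2 := tm_le (a+2)
  have s10 := w1 0 (by omega)
  have s11 := w1 1 (by omega)
  have s20 := w2 0 (by omega)
  have s21 := w2 1 (by omega)
  have s30 := w3 0 (by omega)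
  have s31 := w3 1 (by omega)
  simp only [add_zero, add_assoc, Nat.reduceAdd] at s10 s11 s20 s21 s30 s31
  by_cases haa : tm a = tm (a+1)
  · exfalso
    by_cases hh : tm a = i
    · exact no_cube m2 (by omega) (by omega)
    · exact no_cube m1 (by omega) (by omega)
  obtain rfl | hk : k = 2 ∨ 3 ≤ k := by omega
  · exact two_case a i j hi hj haa
  have s12 := w1 2 (by omega)
  have s22 := w2 2 (by omega)
  have s32 := w3 2 (by omega)
  simp only [add_assoc, Nat.reduceAdd] at s12 s22 s32
  obtain rfl | hk : k = 3 ∨ 4 ≤ k := by omega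
  · exfalso
    simp only [add_assoc, Nat.reduceAdd] at r1 r2 r3
    by_cases hbb : tm (a+1) = tm (a+2)
    · by_cases hh : tm (a+1) = j
      · exact no_cube (m1+2) (by simp only [add_assoc, Nat.reduceAdd]; omega)
          (by simp only [add_assoc, Nat.reduceAdd]; omega)
      · exact no_cube (m2+2) (by simp only [add_assoc, Nat.reduceAdd]; omega)
          (by simp only [add_assoc, Nat.reduceAdd]; omega)
    · by_cases hij : i = j
      · by_cases h : tm a = 1 - i
        · exact no_aabaa m3 (by omega) (by omega)
        · exact no_alt m3 (by omega) (by omega) (by omega)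
      · by_cases h : tm a = j
        · exact no_aabaa m1 (by omega) (by omega)
        · exact no_alt m1 (by omega) (by omega) (by omega)
  have s13 := w1 3 (by omega)
  have s23 := w2 3 (by omega)
  simp only [add_assoc, Nat.reduceAdd] at s13 s23
  have y1 := sync (m1+1) a s10 s11 s12 s13
  have y2 := sync (m2+1) a s20 s21 s22 s23
  have force : ∀ m x, m % 2 = 0 → tm (m+1) = x → tm m = 1 - x := by
    intro m x hm hx
    obtain ⟨n, rfl⟩ : ∃ n, m = 2*n := ⟨m/2, by omega⟩
    have := tm_even n
    have := tm_odd n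
    have := tm_le n
    omega
  obtain hao | hae : a % 2 = 1 ∨ a % 2 = 0 := by omega
  · exfalso
    have f1 := force m1 _ (by omega) s10
    have f2 := force m2 _ (by omega) s20
    omega
  obtain hko | hke : k % 2 = 1 ∨ k % 2 = 0 := by omega
  · exfalso
    have v1 := w1 (k-1) (by omega)
    have v2 := w2 (k-1) (by omega)
    rw [show m1 + 1 + (k-1) = m1 + k by omega] at v1
    rw [show m2 + 1 + (k-1) = m2 + k by omega] at v2
    have f1 := force (m1+k) _ (by omega) r1
    have f2 := force (m2+k) _ (by omega) r2
    omega
  obtain ⟨b, rfl⟩ : ∃ n, a = 2*n := ⟨a/2, by omega⟩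
  obtain ⟨l, rfl⟩ : ∃ n, k = 2*n := ⟨k/2, by omega⟩
  rw [P_double _ _ _ _ (by omega) (by omega)] at q1 q2 q3 ⊢
  exact ih l (by omega) b (1-i) j (by omega) (by omega) hj q1 q2 q3

theorem tmZ_nat (n : ℕ) : tmZ n = tm n := by simp [tmZ]

theorem tm_four (n : ℕ) : tm (4*n) = tm n ∧ tm (4*n+1) = 1 - tm n ∧ tm (4*n+2) = 1 - tm n ∧
    tm (4*n+3) = tm n := by
  have h1 := tm_even (2*n)
  have h2 := tm_odd (2*n)
  have h3 := tm_even (2*n+1)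
  have h4 := tm_odd (2*n+1)
  have := tm_even n
  have := tm_odd n
  have := tm_le n
  rw [show 2*(2*n) = 4*n by ring] at h1 h2
  rw [show 2*(2*n+1) = 4*n+2 by ring] at h3 h4
  rw [show 4*n+2+1 = 4*n+3 by ring] at h4
  omega

theorem tmZ_four (n : ℤ) : tmZ (4*n) = tmZ n ∧ tmZ (4*n+1) = 1 - tmZ n ∧
    tmZ (4*n+2) = 1 - tmZ n ∧ tmZ (4*n+3) = tmZ n := by
  by_cases h : 0 ≤ n
  · obtain ⟨k, rfl⟩ := Int.eq_ofNat_of_zero_le h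
    have := tm_four k
    rw [← tmZ_nat, ← tmZ_nat, ← tmZ_nat, ← tmZ_nat, ← tmZ_nat] at this
    exact_mod_cast this
  · obtain ⟨k, rfl⟩ : ∃ k : ℕ, n = -1 - k := ⟨(-1-n).toNat, by omega⟩
    obtain ⟨h1, h2, h3, h4⟩ := tm_four k
    have neg : ∀ (z : ℤ) (j : ℕ), z = -1 - j → tmZ z = tm j := by
      intro z j hz
      unfold tmZ
      rw [if_neg (by omega)]
      congr 1; omega
    rw [neg (-1-k) k rfl, neg _ (4*k+3) (by push_cast; ring), neg _ (4*k+2) (by push_cast; ring),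
      neg _ (4*k+1) (by push_cast; ring), neg _ (4*k) (by push_cast; ring)]
    exact ⟨h4, h3, h2, h1⟩

theorem tmZ_shift (N : ℕ) : ∀ n : ℤ, -4^N ≤ n → n < 4^N → tmZ n = tmZ (6*4^N + n) := by
  induction N with
  | zero =>
    intro n h1 h2
    obtain rfl | rfl : n = -1 ∨ n = 0 := by simp at h1 h2; omega
    · simp [tmZ, tm]
    · simp [tmZ, tm]
  | succ N ih =>
    intro n h1 h2
    have hq := ih (n/4) (by rw [pow_succ] at h1; omega) (by rw [pow_succ] at h2; omega)
    set q := n/4 with hqd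
    obtain ⟨a0, a1, a2, a3⟩ := tmZ_four q
    obtain ⟨b0, b1, b2, b3⟩ := tmZ_four (6*4^N+q)
    have hr : n = 4*q ∨ n = 4*q+1 ∨ n = 4*q+2 ∨ n = 4*q+3 := by omega
    rw [← hq] at b0 b1 b2 b3
    rcases hr with h | h | h | h <;> rw [h]
    · rw [a0, ← b0]; congr 1; ring
    · rw [a1, ← b1]; congr 1; ring
    · rw [a2, ← b2]; congr 1; ring
    · rw [a3, ← b3]; congr 1; ring

theorem to_nat (m : ℤ) (k : ℕ) : ∃ a : ℕ, ∀ t < k, tmZ (m + t) = tm (a + t) := by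
  obtain ⟨N, hN⟩ : ∃ N : ℕ, |m| + k < (4:ℤ)^N := by
    refine ⟨(|m|+k).toNat, ?_⟩
    have : (|m|+k).toNat < 4^(|m|+k).toNat := Nat.lt_pow_self (by norm_num)
    have h2 : (((|m|+k).toNat : ℕ) : ℤ) < 4^(|m|+k).toNat := by exact_mod_cast this
    have := Int.self_le_toNat (|m|+k)
    omega
  have h1 := neg_abs_le m
  have h2 := le_abs_self m
  refine ⟨(6*4^N+m).toNat, ?_⟩
  intro t ht
  rw [tmZ_shift N (m+t) (by omega) (by omega), ← tmZ_nat]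
  congr 1
  push_cast
  rw [Int.toNat_of_nonneg (by omega)]; ring

def natBlock (a k : ℕ) : List ℕ := (List.range k).map fun j => tm (a + j)

theorem tmBlock_eq (m : ℤ) (k : ℕ) :
    tmBlock m k = (List.range k).map fun t : ℕ => tmZ (m + (t : ℤ)) := by
  unfold tmBlock
  simp only [List.bind_eq_flatMap, List.map_flatMap, List.pure_def, List.map_cons, List.map_nil]
  exact (List.map_eq_flatMap).symm

theorem isFactor_iff (α : List ℕ) :
    IsFactor α ↔ α ≠ [] ∧ ∃ a : ℕ, α = natBlock a α.length := by
  unfold IsFactor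
  refine and_congr_right fun _ => ⟨?_, ?_⟩
  · rintro ⟨m, hm⟩
    obtain ⟨a, ha⟩ := to_nat m α.length
    refine ⟨a, hm.trans ?_⟩
    rw [tmBlock_eq]
    unfold natBlock
    apply List.map_congr_left
    intro t ht
    exact ha t (List.mem_range.1 ht)
  · rintro ⟨a, ha⟩
    refine ⟨a, ha.trans ?_⟩
    rw [tmBlock_eq]
    unfold natBlock
    apply List.map_congr_left
    intro t ht
    rw [← tmZ_nat]; push_cast; rfl

theorem ext_iff (a k i j : ℕ) :
    IsFactor (i :: (natBlock a k ++ [j])) ↔ P k a i j := by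
  rw [isFactor_iff]
  have hlen : (i :: (natBlock a k ++ [j])).length = k + 1 + 1 := by simp [natBlock]
  have hb : ∀ m, natBlock m (k+1+1) = tm m :: (natBlock (m+1) k ++ [tm (m+k+1)]) := by
    intro m
    unfold natBlock
    rw [List.range_succ_eq_map, List.map_cons, List.map_map, List.range_succ, List.map_append]
    simp only [add_zero, List.map_cons, List.map_nil, Function.comp_apply, Nat.succ_eq_add_one]
    congr 2
    apply List.map_congr_left
    intro t _
    simp only [Function.comp_apply]
    congr 1; omega
  rw [hlen]
  simp only [hb, P]
  constructor
  · rintro ⟨-, m, hm⟩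
    rw [List.cons.injEq] at hm
    obtain ⟨h1, h2⟩ := hm
    obtain ⟨h2, h3⟩ := List.append_inj' h2 rfl
    refine ⟨m, h1.symm, by simpa using h3.symm, ?_⟩
    intro t ht
    exact (List.map_inj_left.1 h2 t (List.mem_range.2 ht)).symm
  · rintro ⟨m, h1, h2, h3⟩
    refine ⟨by simp, m, ?_⟩
    rw [h1, h2]
    congr 2
    apply List.map_congr_left
    intro t ht
    exact (h3 t (List.mem_range.1 ht)).symm

theorem exists_ext (a k : ℕ) : ∃ i j, i ≤ 1 ∧ j ≤ 1 ∧ P k a i j := by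
  -- make room on the left
  obtain ⟨b, hb⟩ := to_nat ((a:ℤ) - 1) (k+1)
  refine ⟨tm b, tm (b+k+1), tm_le _, tm_le _, b, rfl, rfl, ?_⟩
  intro t ht
  have := hb (t+1) (by omega)
  rw [← tmZ_nat (a+t), add_right_comm, add_assoc, ← this]
  congr 1; push_cast; ring

theorem extension_number (α : List ℕ) (hα : IsFactor α) (hlen : 2 ≤ α.length) :
    ({p : ℕ × ℕ | (p.1 = 0 ∨ p.1 = 1) ∧ (p.2 = 0 ∨ p.2 = 1) ∧
        IsFactor (p.1 :: (α ++ [p.2]))}.ncard = 1 ∨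
     {p : ℕ × ℕ | (p.1 = 0 ∨ p.1 = 1) ∧ (p.2 = 0 ∨ p.2 = 1) ∧
        IsFactor (p.1 :: (α ++ [p.2]))}.ncard = 2 ∨
     {p : ℕ × ℕ | (p.1 = 0 ∨ p.1 = 1) ∧ (p.2 = 0 ∨ p.2 = 1) ∧
        IsFactor (p.1 :: (α ++ [p.2]))}.ncard = 4) := by
  classical
  obtain ⟨-, a, ha⟩ := (isFactor_iff α).1 hα
  generalize α.length = k at ha hlen
  subst ha
  simp only [ext_iff]
  have key := three_imp k a
  have k00 := key 0 0 hlen (by omega) (by omega)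
  have k01 := key 0 1 hlen (by omega) (by omega)
  have k10 := key 1 0 hlen (by omega) (by omega)
  have k11 := key 1 1 hlen (by omega) (by omega)
  obtain ⟨i, j, hi, hj, hP⟩ := exists_ext a k
  simp only [Nat.sub_self, Nat.sub_zero] at k00 k01 k10 k11
  have hS : {p : ℕ × ℕ | (p.1 = 0 ∨ p.1 = 1) ∧ (p.2 = 0 ∨ p.2 = 1) ∧ P k a p.1 p.2} =
      ((({(0,0),(0,1),(1,0),(1,1)} : Finset (ℕ × ℕ)).filter fun p => P k a p.1 p.2 :
        Finset (ℕ × ℕ)) : Set (ℕ × ℕ)) := by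
    ext ⟨x, y⟩
    simp only [Set.mem_ofPred_eq, Finset.coe_filter, Finset.mem_insert, Finset.mem_singleton,
      Prod.mk.injEq]
    constructor
    · rintro ⟨rfl | rfl, rfl | rfl, h⟩ <;> simp [h]
    · rintro ⟨⟨rfl, rfl⟩ | ⟨rfl, rfl⟩ | ⟨rfl, rfl⟩ | ⟨rfl, rfl⟩, h⟩ <;> simp [h]
  rw [hS, Set.ncard_coe_finset]
  have hne : P k a 0 0 ∨ P k a 0 1 ∨ P k a 1 0 ∨ P k a 1 1 := by
    obtain rfl | rfl : i = 0 ∨ i = 1 := by omega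
    all_goals obtain rfl | rfl : j = 0 ∨ j = 1 := by omega
    · exact Or.inl hP
    · exact Or.inr (Or.inl hP)
    · exact Or.inr (Or.inr (Or.inl hP))
    · exact Or.inr (Or.inr (Or.inr hP))
  clear hS hP key
  by_cases h00 : P k a 0 0 <;> by_cases h01 : P k a 0 1 <;> by_cases h10 : P k a 1 0 <;>
    by_cases h11 : P k a 1 1 <;>
    first
    | (exfalso; simp only [h00, h01, h10, h11] at k00 k01 k10 k11 hne; simp at k00 k01 k10 k11 hne; done)
    | simp [Finset.filter_insert, Finset.filter_singleton, h00, h01, h10, h11]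
end
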